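/- arXiv:2312.14572 — 2 statements merged into one kernel-verified Lean document; each statement's English description precedes it below -/
import Mathlib

section
/- Let L ∈ ℝ^{mn×mn} be a symmetric matrix, let (π_sdp, P_sdp) be a GW-SDP-feasible pair minimizing ⟨L, ·⟩ over all GW-SDP-feasible pairs, and let π* ∈ Π(α,β) minimize the quadratic objective vec(·)ᵀ L vec(·) over Π(α,β). If ⟨L, P_sdp⟩ > 0, then the approximation ratio of π_sdp is bounded: (vec(π_sdp)ᵀ L vec(π_sdp)) / (vec(π*)ᵀ L vec(π*)) ≤ (vec(π_sdp)ᵀ L vec(π_sdp)) / ⟨L, P_sdp⟩. -/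
/-!
The SDP is a relaxation of the quadratic problem: a coupling `π` lifts to the feasible pair
`(π, vec(π) vec(π)ᵀ)` (`rankOne_feasible`), whose SDP value is the quadratic objective of `π`
(`trInner_rankOne`). Hence `0 < ⟨L, Psdp⟩ ≤ gwObj L πstar ≤ gwObj L πsdp`, so all the quantities in
the ratios are positive, and replacing the denominator `gwObj L πstar` by the smaller
`⟨L, Psdp⟩` can only increase the ratio.
-/

open Matrix BigOperators

noncomputable section

/-- A probability vector: entrywise nonnegative with entries summing to 1. -/
def IsProbVec {k : ℕ} (α : Fin k → ℝ) : Prop :=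
  (∀ i, 0 ≤ α i) ∧ ∑ i, α i = 1

/-- `π ∈ Π(α,β)`: nonnegative entries, row sums `α`, column sums `β`. -/
def IsCoupling {m n : ℕ} (α : Fin m → ℝ) (β : Fin n → ℝ)
    (π : Matrix (Fin m) (Fin n) ℝ) : Prop :=
  (∀ i j, 0 ≤ π i j) ∧ (∀ i, ∑ j, π i j = α i) ∧ (∀ j, ∑ i, π i j = β j)

/-- Vectorization of an `m × n` matrix, indexed by pairs `(i, j)`. -/
def vecz {m n : ℕ} (π : Matrix (Fin m) (Fin n) ℝ) : Fin m × Fin n → ℝ :=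
  fun p => π p.1 p.2

/-- `a_i = vec(e_i 1ₙᵀ)`: indicator of the entries in row `i`. -/
def aVec {m n : ℕ} (i : Fin m) : Fin m × Fin n → ℝ :=
  fun p => if p.1 = i then 1 else 0

/-- `b_j = vec(1ₘ e_jᵀ)`: indicator of the entries in column `j`. -/
def bVec {m n : ℕ} (j : Fin n) : Fin m × Fin n → ℝ :=
  fun p => if p.2 = j then 1 else 0

/-- The `(mn+1) × (mn+1)` block matrix `[[P, x], [xᵀ, c]]`. -/
def blockMat {m n : ℕ} (P : Matrix (Fin m × Fin n) (Fin m × Fin n) ℝ)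
    (x : Fin m × Fin n → ℝ) (c : ℝ) :
    Matrix (Option (Fin m × Fin n)) (Option (Fin m × Fin n)) ℝ :=
  Matrix.of fun u v =>
    match u, v with
    | some a, some b => P a b
    | some a, none => x a
    | none, some b => x b
    | none, none => c

/-- The trace inner product `⟨L, P⟩ = ∑_{u,v} L_{uv} P_{uv}`. -/
def trInner {m n : ℕ} (L P : Matrix (Fin m × Fin n) (Fin m × Fin n) ℝ) : ℝ :=
  ∑ u, ∑ v, L u v * P u v

/-- The Gromov-Wasserstein objective `vec(π)ᵀ L vec(π)`. -/
def gwObj {m n : ℕ} (L : Matrix (Fin m × Fin n) (Fin m × Fin n) ℝ)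
    (π : Matrix (Fin m) (Fin n) ℝ) : ℝ :=
  vecz π ⬝ᵥ L.mulVec (vecz π)

/-- Feasibility for the proposed SDP relaxation (GW-SDP). -/
def GWSDPFeasible {m n : ℕ} (α : Fin m → ℝ) (β : Fin n → ℝ)
    (π : Matrix (Fin m) (Fin n) ℝ)
    (P : Matrix (Fin m × Fin n) (Fin m × Fin n) ℝ) : Prop :=
  IsCoupling α β π ∧
  (blockMat P (vecz π) 1).PosSemidef ∧
  (∀ i, P.mulVec (aVec i) = α i • vecz π) ∧
  (∀ j, P.mulVec (bVec j) = β j • vecz π) ∧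
  (∀ u v, 0 ≤ P u v)

/-- Feasibility for the standard SDP relaxation. -/
def StdSDPFeasible {m n : ℕ} (α : Fin m → ℝ) (β : Fin n → ℝ)
    (π : Matrix (Fin m) (Fin n) ℝ)
    (P : Matrix (Fin m × Fin n) (Fin m × Fin n) ℝ) : Prop :=
  IsCoupling α β π ∧ (blockMat P (vecz π) 1).PosSemidef

lemma trInner_rankOne {m n : ℕ} (L : Matrix (Fin m × Fin n) (Fin m × Fin n) ℝ)
    (π : Matrix (Fin m) (Fin n) ℝ) :
    trInner L (vecMulVec (vecz π) (vecz π)) = gwObj L π := by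
  simp only [trInner, gwObj, dotProduct, mulVec, vecMulVec_apply, Finset.mul_sum]
  exact Finset.sum_congr rfl fun u _ => Finset.sum_congr rfl fun v _ => by ring

lemma vecz_dotProduct_aVec {m n : ℕ} (π : Matrix (Fin m) (Fin n) ℝ) (i : Fin m) :
    vecz π ⬝ᵥ aVec i = ∑ j, π i j := by
  simp only [dotProduct, vecz, aVec, mul_ite, mul_one, mul_zero, Fintype.sum_prod_type]
  rw [Finset.sum_comm]
  simp

lemma vecz_dotProduct_bVec {m n : ℕ} (π : Matrix (Fin m) (Fin n) ℝ) (j : Fin n) :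
    vecz π ⬝ᵥ bVec j = ∑ i, π i j := by
  simp [dotProduct, vecz, bVec, Fintype.sum_prod_type]

/-- The block matrix of the rank-one lift is itself rank one: it equals `w wᵀ` for
`w = (x, 1)`. -/
lemma blockMat_rankOne_posSemidef {m n : ℕ} (x : Fin m × Fin n → ℝ) :
    (blockMat (vecMulVec x x) x 1).PosSemidef := by
  have h : blockMat (vecMulVec x x) x 1 =
      vecMulVec (fun o : Option (Fin m × Fin n) => o.elim 1 x)
        (star fun o : Option (Fin m × Fin n) => o.elim 1 x) := by
    ext u v
    cases u <;> cases v <;> simp [blockMat, vecMulVec_apply]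
  rw [h]
  exact posSemidef_vecMulVec_self_star _

/-- Every coupling lifts to a feasible point of the relaxation. -/
lemma rankOne_feasible {m n : ℕ} {α : Fin m → ℝ} {β : Fin n → ℝ}
    {π : Matrix (Fin m) (Fin n) ℝ} (hπ : IsCoupling α β π) :
    GWSDPFeasible α β π (vecMulVec (vecz π) (vecz π)) := by
  refine ⟨hπ, blockMat_rankOne_posSemidef _, fun i => ?_, fun j => ?_, fun u v => ?_⟩
  · rw [vecMulVec_mulVec, vecz_dotProduct_aVec, hπ.2.1 i, op_smul_eq_smul]
  · rw [vecMulVec_mulVec, vecz_dotProduct_bVec, hπ.2.2 j, op_smul_eq_smul]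
  · exact mul_nonneg (hπ.1 _ _) (hπ.1 _ _)

/-- Bound on the approximation ratio of the GW-SDP transportation plan. -/
theorem stmt_3 {m n : ℕ} (α : Fin m → ℝ) (β : Fin n → ℝ)
    (hα : IsProbVec α) (hβ : IsProbVec β)
    (L : Matrix (Fin m × Fin n) (Fin m × Fin n) ℝ) (hL : L.IsSymm)
    (πsdp : Matrix (Fin m) (Fin n) ℝ) (Psdp : Matrix (Fin m × Fin n) (Fin m × Fin n) ℝ)
    (hfeas : GWSDPFeasible α β πsdp Psdp)
    (hmin : ∀ π' P', GWSDPFeasible α β π' P' → trInner L Psdp ≤ trInner L P')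
    (πstar : Matrix (Fin m) (Fin n) ℝ) (hπstar : IsCoupling α β πstar)
    (hstar : ∀ π', IsCoupling α β π' → gwObj L πstar ≤ gwObj L π')
    (hpos : 0 < trInner L Psdp) :
    gwObj L πsdp / gwObj L πstar ≤ gwObj L πsdp / trInner L Psdp := by
  have hlift := hmin _ _ (rankOne_feasible hπstar)
  rw [trInner_rankOne] at hlift
  have hstar_pos : 0 < gwObj L πstar := hpos.trans_le hlift
  have hle : gwObj L πstar ≤ gwObj L πsdp := hstar πsdp hfeas.1
  exact div_le_div_of_nonneg_left (hstar_pos.le.trans hle) hpos hlift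
end
end

section
/- Let π̃ ∈ Π(α,β), let s ≠ t be indices in [mn], and let v ∈ ℝ^{mn} be the vector with v_s = 1, v_t = −1, and all other entries zero. Then for every c ≥ 0, the pair (π̃, P_c) with P_c := vec(π̃)vec(π̃)ᵀ + c·vvᵀ is standard-SDP-feasible, and if L ∈ ℝ^{mn×mn} is symmetric with zero diagonal then ⟨L, P_c⟩ = ⟨L, vec(π̃)vec(π̃)ᵀ⟩ − 2c·L_{st}. -/
/-!
The block matrix `[[x xᵀ + c v vᵀ, x], [xᵀ, 1]]` with `x = vec(π̃)` is the sum of the rank-one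
matrices `(x, 1) (x, 1)ᵀ` and `c (v, 0) (v, 0)ᵀ`, hence positive semidefinite for `c ≥ 0`.
Bilinearity of the trace inner product leaves `c vᵀ L v`, and for `v = e_s - e_t` this is
`c (L_ss - L_st - L_ts + L_tt) = -2 c L_st`.
-/

open Matrix BigOperators

noncomputable section

/-- The block matrix of a lifted rank-one matrix plus a nonnegative multiple of another one is
positive semidefinite: it is a sum of rank-one matrices over the bordered index set. -/
theorem blockMat_posSemidef {m n : ℕ} (x v : Fin m × Fin n → ℝ) {c : ℝ} (hc : 0 ≤ c) :
    (blockMat (Matrix.vecMulVec x x + c • Matrix.vecMulVec v v) x 1).PosSemidef := by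
  have h : blockMat (Matrix.vecMulVec x x + c • Matrix.vecMulVec v v) x 1
      = Matrix.vecMulVec (fun o : Option (Fin m × Fin n) => o.elim 1 x)
          (star fun o : Option (Fin m × Fin n) => o.elim 1 x)
        + c • Matrix.vecMulVec (fun o : Option (Fin m × Fin n) => o.elim 0 v)
          (star fun o : Option (Fin m × Fin n) => o.elim 0 v) := by
    ext a b
    cases a <;> cases b <;> simp [blockMat, Matrix.vecMulVec_apply]
  rw [h]
  exact (Matrix.posSemidef_vecMulVec_self_star _).add
    ((Matrix.posSemidef_vecMulVec_self_star _).smul hc)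

theorem trInner_add_smul {m n : ℕ} (L P Q : Matrix (Fin m × Fin n) (Fin m × Fin n) ℝ) (c : ℝ) :
    trInner L (P + c • Q) = trInner L P + c * trInner L Q := by
  simp only [trInner, Matrix.add_apply, Matrix.smul_apply, smul_eq_mul, Finset.mul_sum,
    ← Finset.sum_add_distrib]
  exact Finset.sum_congr rfl fun _ _ => Finset.sum_congr rfl fun _ _ => by ring

theorem trInner_vecMulVec {m n : ℕ} (L : Matrix (Fin m × Fin n) (Fin m × Fin n) ℝ)
    (v : Fin m × Fin n → ℝ) : trInner L (Matrix.vecMulVec v v) = v ⬝ᵥ L.mulVec v := by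
  simp only [trInner, Matrix.vecMulVec_apply, dotProduct, Matrix.mulVec, Finset.mul_sum]
  exact Finset.sum_congr rfl fun _ _ => Finset.sum_congr rfl fun _ _ => by ring

/-- The perturbed pair `(π̃, vec(π̃) vec(π̃)ᵀ + c v vᵀ)` is standard-SDP-feasible, and for a
symmetric `L` with zero diagonal the objective equals `⟨L, vec(π̃) vec(π̃)ᵀ⟩ - 2 c L_{st}`. -/
theorem stmt_14 {m n : ℕ} (α : Fin m → ℝ) (β : Fin n → ℝ)
    (hα : IsProbVec α) (hβ : IsProbVec β)
    (πt : Matrix (Fin m) (Fin n) ℝ) (hπ : IsCoupling α β πt)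
    (s t : Fin m × Fin n) (hst : s ≠ t)
    (v : Fin m × Fin n → ℝ)
    (hv : v = fun u => if u = s then 1 else if u = t then -1 else 0)
    (L : Matrix (Fin m × Fin n) (Fin m × Fin n) ℝ) (hL : L.IsSymm)
    (hdiag : ∀ u, L u u = 0)
    (c : ℝ) (hc : 0 ≤ c) :
    StdSDPFeasible α β πt
      (Matrix.vecMulVec (vecz πt) (vecz πt) + c • Matrix.vecMulVec v v) ∧
    trInner L (Matrix.vecMulVec (vecz πt) (vecz πt) + c • Matrix.vecMulVec v v)
      = trInner L (Matrix.vecMulVec (vecz πt) (vecz πt)) - 2 * c * L s t := by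
  refine ⟨⟨hπ, blockMat_posSemidef _ _ hc⟩, ?_⟩
  have hv' : v = Pi.single s 1 - Pi.single t 1 := by
    subst hv
    funext u
    by_cases h1 : u = s
    · subst h1
      simp [hst]
    · by_cases h2 : u = t
      · subst h2
        simp [h1]
      · simp [h1, h2]
  have hts : L t s = L s t := hL.apply s t
  have hq : v ⬝ᵥ L.mulVec v = -2 * L s t := by
    rw [hv']
    simp [Matrix.mulVec_sub, sub_dotProduct, dotProduct_sub, hdiag, hts]
    ring
  rw [trInner_add_smul, trInner_vecMulVec L v, hq]
  ring
end
end
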